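/- There exists a density measure μ and a set A ⊆ ℕ with μ(2A) ≠ (1/2)·μ(A), where 2A = {2a : a ∈ A}. Concretely, let A = ⋃_{i=1}^{∞} {2^{2^i}, …, 2·2^{2^i} − 1}, let ℱ be any free ultrafilter on ℕ containing {2^{2^i} : i ∈ ℕ}, let 2ℱ be the ultrafilter with base {2F : F ∈ ℱ}, and let μ(X) = 2·((2ℱ)-lim X(n)/n) − (ℱ-lim X(n)/n); then μ(A) = 1 and μ(2A) = 0. In particular, property (b) of Šalát and Tijdeman (if lim_{n→∞} A(n)/B(tn) = 1 then μ(A) = t·μ(B)) fails for some density measure. -/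

import Mathlib

open Filter Topology

/-- The counting function `A(n) = |A ∩ [1, n]|`, as a real number. -/
noncomputable def count (A : Set ℕ) (n : ℕ) : ℝ :=
  ((A ∩ Set.Icc 1 n).ncard : ℝ)

/-- `A ⊆ ℕ` has asymptotic density `a`, i.e. `A(n)/n → a`. -/
def HasDensity (A : Set ℕ) (a : ℝ) : Prop :=
  Filter.Tendsto (fun n : ℕ => count A n / n) Filter.atTop (nhds a)

/-- Membership of a permutation `π` of `ℕ` in the Lévy group `𝒢`:
`|{k : k ≤ n < π(k)}| / n → 0`. -/
def InLevyGroup (π : Equiv.Perm ℕ) : Prop :=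
  Filter.Tendsto
    (fun n : ℕ => (({k : ℕ | k ≤ n ∧ n < π k}.ncard : ℝ) / n))
    Filter.atTop (nhds 0)

/-- A finitely additive probability measure defined on all subsets of `ℕ`,
with values in `[0, 1]`. -/
def IsFAMeasure (μ : Set ℕ → ℝ) : Prop :=
  (∀ A : Set ℕ, 0 ≤ μ A) ∧ (∀ A : Set ℕ, μ A ≤ 1) ∧ μ Set.univ = 1 ∧
    ∀ A B : Set ℕ, Disjoint A B → μ (A ∪ B) = μ A + μ B

/-- A density measure: a finitely additive measure extending asymptotic density. -/
def IsDensityMeasure (μ : Set ℕ → ℝ) : Prop :=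
  IsFAMeasure μ ∧ ∀ (A : Set ℕ) (a : ℝ), HasDensity A a → μ A = a

/-- Statistical convergence of a real sequence `x` to `L`: for every `ε > 0`
the set `{n : |x n − L| ≥ ε}` has asymptotic density zero. -/
def StatTendsto (x : ℕ → ℝ) (L : ℝ) : Prop :=
  ∀ ε : ℝ, 0 < ε → HasDensity {n : ℕ | ε ≤ |x n - L|} 0

/-- The limit of a (bounded) real sequence along an ultrafilter on `ℕ`. -/
noncomputable def ulim (𝒰 : Ultrafilter ℕ) (x : ℕ → ℝ) : ℝ :=
  limUnder (𝒰 : Filter ℕ) x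

/-- The set `A = ⋃_{i=1}^∞ {2^(2^i), …, 2·2^(2^i) − 1}`. -/
def Aex : Set ℕ := {m : ℕ | ∃ i : ℕ, 1 ≤ i ∧ 2 ^ 2 ^ i ≤ m ∧ m < 2 * 2 ^ 2 ^ i}

/-- Blümlinger's density measure `μ(X) = 2·((2ℱ)-lim X(n)/n) − (ℱ-lim X(n)/n)`. -/
noncomputable def muEx (𝒰 𝒱 : Ultrafilter ℕ) (X : Set ℕ) : ℝ :=
  2 * ulim 𝒱 (fun n : ℕ => count X n / n) - ulim 𝒰 (fun n : ℕ => count X n / n)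

/-! The definition makes `μ(X)` a difference of two limits, but since `2 * (X(2n)/2n) - X(n)/n` is
the proportion of `X` inside the window `(n, 2n]`, `μ(X)` is a single limit along `ℱ` of these
proportions; so `μ` is positive and additive, and it extends density because both terms do. When
`n = 2^(2^i)`, the set `A` fills the window `(n, 2n]` except for the endpoint `2n`, whereas `2A`
meets it at most in `2n`: doubling moves the block `[n, 2n)` into `[2n, 4n)`, and moves the earlier
blocks, which are far smaller, to places below `n`. -/

/-- The relative frequency `|X ∩ (n, 2n]| / n` of `X` in the dyadic window `(n, 2n]`, whose limit
along `ℱ` is Blümlinger's measure. At `n = 0` it is `0`. -/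
noncomputable def dyadicFreq (X : Set ℕ) (n : ℕ) : ℝ :=
  (X ∩ Set.Ioc n (2 * n)).ncard / n

/-- The union of the blocks `[n, 2n)` over `n ∈ S`: the shape of the set `A` of the
counterexample, for which `S = {2^(2^i) : i ≥ 1}`. -/
def doublingBlocks (S : Set ℕ) : Set ℕ :=
  ⋃ n ∈ S, Set.Ico n (2 * n)

lemma tendsto_ulim_of_isBounded (𝒰 : Ultrafilter ℕ) {x : ℕ → ℝ}
    (hx : Bornology.IsBounded (Set.range x)) : Tendsto x 𝒰 (𝓝 (ulim 𝒰 x)) := by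
  have hmem : closure (Set.range x) ∈ 𝒰.map x :=
    mem_of_superset (Ultrafilter.mem_map.2 (univ_mem' Set.mem_range_self)) subset_closure
  obtain ⟨L, -, hL⟩ := hx.isCompact_closure.ultrafilter_le_nhds _ (le_principal_iff.2 hmem)
  exact tendsto_nhds_limUnder ⟨L, hL⟩

section Counting

variable (X : Set ℕ)

lemma count_le (n : ℕ) : count X n ≤ n := by
  have h : (X ∩ Set.Icc 1 n).ncard ≤ n := by
    simpa using Set.ncard_le_ncard (Set.inter_subset_right (s := X)) (Set.finite_Icc 1 n)
  exact Nat.cast_le.2 h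

lemma isBounded_range_count_div : Bornology.IsBounded (Set.range fun n : ℕ => count X n / n) :=
  (Metric.isBounded_Icc 0 1).subset <| Set.range_subset_iff.2 fun n =>
    ⟨div_nonneg (Nat.cast_nonneg _) n.cast_nonneg, div_le_one_of_le₀ (count_le X n) n.cast_nonneg⟩

lemma hasDensity_univ : HasDensity Set.univ 1 := by
  refine tendsto_const_nhds.congr' ?_
  filter_upwards [eventually_ne_atTop 0] with n hn
  simp [count, hn]

lemma count_eq_add_ncard_inter_Ioc {m n : ℕ} (hmn : m ≤ n) :
    count X n = count X m + (X ∩ Set.Ioc m n).ncard := by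
  have hunion : X ∩ Set.Icc 1 n = X ∩ Set.Icc 1 m ∪ X ∩ Set.Ioc m n := by
    ext k
    simp only [Set.mem_inter_iff, Set.mem_Icc, Set.mem_Ioc, Set.mem_union]
    grind
  have hdisj : Disjoint (X ∩ Set.Icc 1 m) (X ∩ Set.Ioc m n) :=
    Set.disjoint_left.2 fun _ hk hk' => hk'.2.1.not_ge hk.2.2
  rw [count, count, hunion, Set.ncard_union_eq hdisj ((Set.finite_Icc _ _).inter_of_right _)
    ((Set.finite_Ioc _ _).inter_of_right _), Nat.cast_add]

end Counting

lemma dyadicFreq_nonneg (X : Set ℕ) (n : ℕ) : 0 ≤ dyadicFreq X n := by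
  unfold dyadicFreq
  positivity

lemma dyadicFreq_le_one (X : Set ℕ) (n : ℕ) : dyadicFreq X n ≤ 1 := by
  have h : (X ∩ Set.Ioc n (2 * n)).ncard ≤ n := by
    simpa [two_mul] using
      Set.ncard_le_ncard (Set.inter_subset_right (s := X)) (Set.finite_Ioc n (2 * n))
  exact div_le_one_of_le₀ (Nat.cast_le.2 h) n.cast_nonneg

lemma dyadicFreq_union {X Y : Set ℕ} (h : Disjoint X Y) (n : ℕ) :
    dyadicFreq (X ∪ Y) n = dyadicFreq X n + dyadicFreq Y n := by
  rw [dyadicFreq, Set.union_inter_distrib_right, Set.ncard_union_eq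
    (h.mono Set.inter_subset_left Set.inter_subset_left)
    ((Set.finite_Ioc _ _).inter_of_right _) ((Set.finite_Ioc _ _).inter_of_right _),
    Nat.cast_add, add_div, dyadicFreq, dyadicFreq]

lemma dyadicFreq_eq_sub (X : Set ℕ) (n : ℕ) :
    dyadicFreq X n = 2 * (count X (2 * n) / (2 * n : ℕ)) - count X n / n := by
  rw [Nat.cast_mul, Nat.cast_two, mul_div_assoc', mul_div_mul_left _ _ two_ne_zero,
    count_eq_add_ncard_inter_Ioc X (Nat.le_mul_of_pos_left n two_pos), add_div,
    add_sub_cancel_left, dyadicFreq]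

lemma tendsto_dyadicFreq_muEx (𝒰 : Ultrafilter ℕ) (X : Set ℕ) :
    Tendsto (dyadicFreq X) 𝒰 (𝓝 (muEx 𝒰 (𝒰.map fun k => 2 * k) X)) := by
  have h𝒰 := tendsto_ulim_of_isBounded 𝒰 (isBounded_range_count_div X)
  have h2𝒰 := tendsto_ulim_of_isBounded (𝒰.map fun k => 2 * k) (isBounded_range_count_div X)
  exact (((tendsto_map'_iff.1 h2𝒰).const_mul 2).sub h𝒰).congr fun n => (dyadicFreq_eq_sub X n).symm

lemma HasDensity.muEx_eq {X : Set ℕ} {a : ℝ} (hX : HasDensity X a) {𝒰 𝒱 : Ultrafilter ℕ}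
    (h𝒰 : (𝒰 : Filter ℕ) ≤ atTop) (h𝒱 : (𝒱 : Filter ℕ) ≤ atTop) : muEx 𝒰 𝒱 X = a := by
  rw [muEx, ulim, ulim, (hX.mono_left h𝒰).limUnder_eq, (hX.mono_left h𝒱).limUnder_eq]
  ring

theorem isDensityMeasure_muEx {𝒰 : Ultrafilter ℕ} (h𝒰 : (𝒰 : Filter ℕ) ≤ atTop) :
    IsDensityMeasure (muEx 𝒰 (𝒰.map fun k => 2 * k)) := by
  have h2𝒰 : ((𝒰.map fun k => 2 * k : Ultrafilter ℕ) : Filter ℕ) ≤ atTop :=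
    (tendsto_id.const_mul_atTop' two_pos).mono_left h𝒰
  have hlim := tendsto_dyadicFreq_muEx 𝒰
  refine ⟨⟨fun X => ?nonneg, fun X => ?le_one, ?univ, fun X Y hXY => ?union⟩,
    fun X a hX => hX.muEx_eq h𝒰 h2𝒰⟩
  case nonneg => exact ge_of_tendsto' (hlim X) (dyadicFreq_nonneg X)
  case le_one => exact le_of_tendsto' (hlim X) (dyadicFreq_le_one X)
  case univ => exact hasDensity_univ.muEx_eq h𝒰 h2𝒰
  case union =>
    exact tendsto_nhds_unique (hlim (X ∪ Y))
      (((hlim X).add (hlim Y)).congr fun n => (dyadicFreq_union hXY n).symm)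

section DoublingBlocks

variable {S : Set ℕ} {n : ℕ} {𝒰 : Ultrafilter ℕ}

lemma one_sub_inv_le_dyadicFreq_doublingBlocks (hn : n ∈ S) (hn0 : n ≠ 0) :
    1 - (n : ℝ)⁻¹ ≤ dyadicFreq (doublingBlocks S) n := by
  have hsub : Set.Ioo n (2 * n) ⊆ doublingBlocks S ∩ Set.Ioc n (2 * n) := fun k hk =>
    ⟨Set.mem_biUnion hn (Set.Ioo_subset_Ico_self hk), Set.Ioo_subset_Ioc_self hk⟩
  have hle := Set.ncard_le_ncard hsub ((Set.finite_Ioc _ _).inter_of_right _)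
  have hcard : (Set.Ioo n (2 * n)).ncard = 2 * n - n - 1 := by simp
  have hcount : n ≤ (doublingBlocks S ∩ Set.Ioc n (2 * n)).ncard + 1 := by omega
  rw [sub_le_iff_le_add, dyadicFreq, inv_eq_one_div, ← add_div, one_le_div (by positivity)]
  exact_mod_cast hcount

lemma image_two_mul_doublingBlocks_inter_Ioc_subset (hS : ∀ m ∈ S, ∀ n ∈ S, m < n → 4 * m ≤ n)
    (hn : n ∈ S) :
    (fun k : ℕ => 2 * k) '' doublingBlocks S ∩ Set.Ioc n (2 * n) ⊆ {2 * n} := by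
  rintro _ ⟨⟨k, hk, rfl⟩, hlt, hle⟩
  obtain ⟨m, hm, hmk, hkm⟩ := Set.mem_iUnion₂.1 hk
  simp only [Set.mem_singleton_iff] at hlt hle ⊢
  rcases lt_or_ge m n with hmn | hnm
  · have := hS m hm n hn hmn
    omega
  · omega

lemma dyadicFreq_image_two_mul_doublingBlocks_le_inv
    (hS : ∀ m ∈ S, ∀ n ∈ S, m < n → 4 * m ≤ n) (hn : n ∈ S) :
    dyadicFreq ((fun k : ℕ => 2 * k) '' doublingBlocks S) n ≤ (n : ℝ)⁻¹ := by
  have hcard := Set.ncard_le_ncard (image_two_mul_doublingBlocks_inter_Ioc_subset hS hn)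
    (Set.finite_singleton _)
  rw [Set.ncard_singleton] at hcard
  rw [dyadicFreq, inv_eq_one_div]
  gcongr
  exact_mod_cast hcard

theorem muEx_doublingBlocks (h𝒰 : (𝒰 : Filter ℕ) ≤ atTop) (hS : S ∈ 𝒰) :
    muEx 𝒰 (𝒰.map fun k => 2 * k) (doublingBlocks S) = 1 := by
  have hinv : Tendsto (fun n : ℕ => 1 - (n : ℝ)⁻¹) 𝒰 (𝓝 1) := by
    simpa using (tendsto_inv_atTop_nhds_zero_nat.mono_left h𝒰).const_sub (1 : ℝ)
  refine tendsto_nhds_unique (tendsto_dyadicFreq_muEx 𝒰 _)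
    (tendsto_of_tendsto_of_tendsto_of_le_of_le' hinv tendsto_const_nhds ?_
      (Eventually.of_forall (dyadicFreq_le_one _)))
  filter_upwards [hS, h𝒰 (eventually_ne_atTop 0)] with n hn hn0
  exact one_sub_inv_le_dyadicFreq_doublingBlocks hn hn0

theorem muEx_image_two_mul_doublingBlocks (h𝒰 : (𝒰 : Filter ℕ) ≤ atTop) (hS𝒰 : S ∈ 𝒰)
    (hS : ∀ m ∈ S, ∀ n ∈ S, m < n → 4 * m ≤ n) :
    muEx 𝒰 (𝒰.map fun k => 2 * k) ((fun k : ℕ => 2 * k) '' doublingBlocks S) = 0 := by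
  refine tendsto_nhds_unique (tendsto_dyadicFreq_muEx 𝒰 _)
    (squeeze_zero' (Eventually.of_forall (dyadicFreq_nonneg _)) ?_
      (tendsto_inv_atTop_nhds_zero_nat.mono_left h𝒰))
  filter_upwards [hS𝒰] with n hn
  exact dyadicFreq_image_two_mul_doublingBlocks_le_inv hS hn

end DoublingBlocks

lemma Aex_eq_doublingBlocks : Aex = doublingBlocks {n | ∃ i : ℕ, 1 ≤ i ∧ n = 2 ^ 2 ^ i} := by
  ext m
  simp only [Aex, doublingBlocks, Set.mem_ofPred_eq, Set.mem_iUnion, Set.mem_Ico, exists_prop]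
  grind

lemma four_mul_two_pow_two_pow_le {i j : ℕ} (hi : 1 ≤ i) (hij : i < j) :
    4 * 2 ^ 2 ^ i ≤ 2 ^ 2 ^ j := by
  have hexp : 2 + 2 ^ i ≤ 2 ^ j :=
    calc 2 + 2 ^ i ≤ 2 ^ i + 2 ^ i := by gcongr; exact Nat.le_pow hi
      _ = 2 ^ (i + 1) := by ring
      _ ≤ 2 ^ j := Nat.pow_le_pow_right two_pos hij
  calc 4 * 2 ^ 2 ^ i = 2 ^ (2 + 2 ^ i) := by rw [pow_add]; norm_num
    _ ≤ 2 ^ 2 ^ j := Nat.pow_le_pow_right two_pos hexp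

theorem salat_tijdeman_property_b_counterexample_general (𝒰 𝒱 : Ultrafilter ℕ)
    (hfree : (𝒰 : Filter ℕ) ≤ Filter.cofinite) {S : Set ℕ} (hmem : S ∈ 𝒰)
    (hS : ∀ m ∈ S, ∀ n ∈ S, m < n → 4 * m ≤ n)
    (h𝒱 : ∀ B : Set ℕ, B ∈ 𝒱 ↔ ∃ F ∈ 𝒰, (fun k : ℕ => 2 * k) '' F ⊆ B) :
    IsDensityMeasure (muEx 𝒰 𝒱) ∧
      muEx 𝒰 𝒱 (doublingBlocks S) = 1 ∧
      muEx 𝒰 𝒱 ((fun k : ℕ => 2 * k) '' doublingBlocks S) = 0 ∧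
      muEx 𝒰 𝒱 ((fun k : ℕ => 2 * k) '' doublingBlocks S) ≠
        (1 / 2) * muEx 𝒰 𝒱 (doublingBlocks S) := by
  obtain rfl : 𝒱 = 𝒰.map fun k => 2 * k :=
    Ultrafilter.ext fun B => (h𝒱 B).trans mem_map_iff_exists_image.symm
  rw [Nat.cofinite_eq_atTop] at hfree
  have hA := muEx_doublingBlocks hfree hmem
  have h2A := muEx_image_two_mul_doublingBlocks hfree hmem hS
  refine ⟨isDensityMeasure_muEx hfree, hA, h2A, ?_⟩
  rw [hA, h2A]
  norm_num

/-- With `ℱ` a free ultrafilter containing `{2^(2^i) : i ≥ 1}` and `2ℱ` the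
ultrafilter with base `{2F : F ∈ ℱ}`, the density measure
`μ(X) = 2·((2ℱ)-lim X(n)/n) − (ℱ-lim X(n)/n)` satisfies `μ(A) = 1` and
`μ(2A) = 0`; in particular `μ(2A) ≠ (1/2)·μ(A)`. -/
theorem salat_tijdeman_property_b_counterexample (𝒰 𝒱 : Ultrafilter ℕ)
    (hfree : (𝒰 : Filter ℕ) ≤ Filter.cofinite)
    (hmem : {n : ℕ | ∃ i : ℕ, 1 ≤ i ∧ n = 2 ^ 2 ^ i} ∈ 𝒰)
    (h𝒱 : ∀ B : Set ℕ, B ∈ 𝒱 ↔ ∃ F ∈ 𝒰, (fun k : ℕ => 2 * k) '' F ⊆ B) :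
    IsDensityMeasure (muEx 𝒰 𝒱) ∧
      muEx 𝒰 𝒱 Aex = 1 ∧
      muEx 𝒰 𝒱 ((fun k : ℕ => 2 * k) '' Aex) = 0 ∧
      muEx 𝒰 𝒱 ((fun k : ℕ => 2 * k) '' Aex) ≠ (1 / 2) * muEx 𝒰 𝒱 Aex := by
  rw [Aex_eq_doublingBlocks]
  refine salat_tijdeman_property_b_counterexample_general 𝒰 𝒱 hfree hmem ?_ h𝒱
  rintro _ ⟨i, hi, rfl⟩ _ ⟨j, -, rfl⟩ hij
  rw [Nat.pow_lt_pow_iff_right one_lt_two, Nat.pow_lt_pow_iff_right one_lt_two] at hij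
  exact four_mul_two_pow_two_pow_le hi hij
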